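/- arXiv:0811.1966 — 2 statements merged into one kernel-verified Lean document; each statement's English description precedes it below -/
import Mathlib

section
/- Let $\underline{a}=\{a_n\}_{n=0}^\infty$ be an increasing sequence of integers, and put $r_n = 2^{-(a_n+1)} \in \mathbb{R}$. The set $R_{\underline{a},2} = \{0\} \cup \{\pm r_n \mid n \in \mathbb{N}\}$ is quasi-convex in $\mathbb{R}$ if and only if the following two conditions hold: (i) the gaps $g_n = a_{n+1} - a_n$ satisfy $g_n > 1$ for all but possibly one index $n \in \mathbb{N}$; (ii) if $g_n = 1$ for some $n \in \mathbb{N}$, then $g_{n+1} > 2$. -/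
/-!
Write `r n = 2 ^ (-(a n + 1))`, call a real number *near* if it lies within `1/4` of an integer,
and call `t` *admissible* if `t * r n` is near for all `n`, i.e. if `x ↦ π (t * x)` is in the polar.

**Necessity.** If `a (k+1) = a k + 1`, then `χ (r k) = 2 χ (r (k+1))`, so a character `χ` of the
polar maps `r (k+1)` into `π [-1/8, 1/8]`. With two such indices `k ≠ l`, the point
`r (k+1) + r (l+1)` is in the hull. If instead `a (k+2) = a (k+1) + 2`, a short computation shows
that `r (k+1) + r (k+2)` is in the hull. A sum of two distinct powers of `2` is not a power of `2`,
so these points are outside the set. Only the additivity of the characters is used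
(`near_eighth`, `near_five`, `sum_notMem`).

**Sufficiency.** It is enough to exclude a positive `x` outside the set by an admissible `t` with
`t * x` not near. If `x > r 0`, a small `t` works. Otherwise `r (n+1) < x < r n` for some `n`. The
powers `2 ^ i` with `i` not a value of `a` are admissible, and those with `a n < i < a (n+1)`
exclude `r (n+1) < x < (3/4) * r n`. If the gaps on both sides of `n` are at least `2`, then
`3 * 2 ^ (a n - 1)` is admissible and excludes `r n / 3 < x < r n` (`exclude_between`).

If there is a gap `1` at `k`, the intervals on both sides of `R = r (k+1)` remain. There
`x = R ± δ`, and the same multipliers, which send `R` to integers, exclude all `δ` except `δ = r n`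
with `n ≥ k + 2` (`exclude_delta`). The points `R - r n` and `R + r n` are excluded by
`2 ^ (a n - 1) - s` with `s = 2 ^ (a (k+1) - 2)` and `s = 7 * 2 ^ (a (k+1) - 2)` respectively.
-/

noncomputable section

/-- The circle group `𝕋 = ℝ/ℤ`. -/
abbrev Circle1 : Type := AddCircle (1 : ℝ)

/-- The canonical projection `π : ℝ → 𝕋`. -/
def circleProj (r : ℝ) : Circle1 := (r : Circle1)

/-- `𝕋₊ = π([-1/4, 1/4])`. -/
def Tplus : Set Circle1 := circleProj '' Set.Icc (-(1/4) : ℝ) (1/4)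

/-- The polar `E^▷` of a set `E ⊆ G`: all continuous characters mapping `E` into `𝕋₊`. -/
def polar {G : Type} [AddCommGroup G] [TopologicalSpace G] (E : Set G) :
    Set (G →+ Circle1) :=
  {χ | Continuous χ ∧ ∀ x ∈ E, χ x ∈ Tplus}

/-- The quasi-convex hull `Q_G(E) = E^▷◁`. -/
def qcHull {G : Type} [AddCommGroup G] [TopologicalSpace G] (E : Set G) : Set G :=
  {x | ∀ χ ∈ polar E, χ x ∈ Tplus}

/-- A set is quasi-convex if it coincides with its quasi-convex hull. -/
def IsQuasiConvex {G : Type} [AddCommGroup G] [TopologicalSpace G] (E : Set G) : Prop :=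
  qcHull E = E

/-- `y` lies within distance `1/4` of an integer. -/
def Near (y : ℝ) : Prop := ∃ z : ℤ, |y - z| ≤ 1/4

/-- The point `r n = 2 ^ (-(a n + 1))`. -/
def rr (a : ℕ → ℤ) (n : ℕ) : ℝ := (2 : ℝ) ^ (-(a n + 1))

/-- The character `x ↦ π (t * x)` of `ℝ` lies in the polar of the points `r n`. -/
def Adm (a : ℕ → ℤ) (t : ℝ) : Prop := ∀ n, Near (t * rr a n)

lemma mem_Tplus_iff (y : ℝ) : ((y : ℝ) : Circle1) ∈ Tplus ↔ Near y := by
  have key : ∀ s : ℝ, (s : Circle1) = y ↔ ∃ z : ℤ, (z : ℝ) = s - y := by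
    intro s
    rw [← sub_eq_zero, ← AddCircle.coe_sub, AddCircle.coe_eq_zero_iff]
    simp
  constructor
  · rintro ⟨s, hs, h⟩
    obtain ⟨z, hz⟩ := (key s).1 h
    refine ⟨-z, abs_le.2 ?_⟩
    push_cast
    constructor <;> linarith [hs.1, hs.2]
  · rintro ⟨z, hz⟩
    exact ⟨y - z, abs_le.1 hz, (key _).2 ⟨-z, by push_cast; ring⟩⟩

lemma not_near {y : ℝ} (z : ℤ) (h1 : z + 1/4 < y) (h2 : y < z + 3/4) : ¬ Near y := by
  rintro ⟨w, hw⟩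
  rw [abs_le] at hw
  have h3 : (z : ℝ) < w := by linarith
  have h4 : (w : ℝ) < z + 1 := by linarith
  have h5 : z < w := by exact_mod_cast h3
  have h6 : w < z + 1 := by exact_mod_cast h4
  omega

lemma near_neg {y : ℝ} (h : Near y) : Near (-y) := by
  obtain ⟨z, hz⟩ := h
  refine ⟨-z, ?_⟩
  rw [abs_le] at *
  push_cast
  constructor <;> linarith

lemma near_of_small {y : ℝ} (h : |y| ≤ 1/4) : Near y := ⟨0, by simpa using h⟩

lemma near_int_sub {y : ℝ} (w : ℤ) (h : Near y) : Near (w - y) := by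
  obtain ⟨z, hz⟩ := h
  refine ⟨w - z, ?_⟩
  rw [abs_le] at *
  push_cast
  constructor <;> linarith

lemma near_int (w : ℤ) : Near w := ⟨w, by simp⟩

/-! ### Powers of two -/

lemma zpow_int {e : ℤ} (he : 0 ≤ e) : ∃ z : ℤ, (2 : ℝ) ^ e = z := by
  lift e to ℕ using he
  exact ⟨2 ^ e, by simp⟩

lemma zpow_le {e f : ℤ} (h : e ≤ f) : (2 : ℝ) ^ e ≤ 2 ^ f :=
  zpow_le_zpow_right₀ (by norm_num) h

lemma zpos (e : ℤ) : (0 : ℝ) < 2 ^ e := by positivity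

lemma zpow_mul_rr (a : ℕ → ℤ) (e : ℤ) (n : ℕ) : (2 : ℝ) ^ e * rr a n = 2 ^ (e - a n - 1) := by
  unfold rr
  rw [← zpow_add₀ (by norm_num)]
  congr 1; ring

lemma rr_pos (a : ℕ → ℤ) (n : ℕ) : 0 < rr a n := zpos _

lemma rr_anti {a : ℕ → ℤ} (ha : StrictMono a) {m n : ℕ} (h : m ≤ n) : rr a n ≤ rr a m :=
  zpow_le (by have := ha.monotone h; omega)

lemma adm_pow {a : ℕ → ℤ} {i : ℤ} (h : ∀ n, a n ≠ i) : Adm a (2 ^ i) := by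
  intro n
  rw [zpow_mul_rr]
  rcases lt_or_gt_of_ne (h n) with h1 | h1
  · obtain ⟨z, hz⟩ := zpow_int (e := i - a n - 1) (by omega)
    rw [hz]; exact near_int z
  · apply near_of_small
    rw [abs_of_pos (zpos _)]
    refine (zpow_le (f := -2) (by omega)).trans ?_
    norm_num

lemma adm_three {a : ℕ → ℤ} {n : ℕ} (h1 : ∀ m < n, a m + 2 ≤ a n)
    (h2 : ∀ m, n < m → a n + 2 ≤ a m) : Adm a (3 * 2 ^ (a n - 1)) := by
  intro m
  rw [mul_assoc, zpow_mul_rr]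
  rcases lt_trichotomy m n with h | h | h
  · obtain ⟨z, hz⟩ := zpow_int (e := a n - 1 - a m - 1) (by have := h1 m h; omega)
    rw [hz]; exact ⟨3 * z, by simp⟩
  · subst h
    have : a m - 1 - a m - 1 = -2 := by ring
    rw [this]
    exact ⟨1, by norm_num [abs_le]⟩
  · apply near_of_small
    rw [abs_of_pos (by have := zpos (a n - 1 - a m - 1); linarith)]
    have := zpow_le (e := a n - 1 - a m - 1) (f := -4) (by have := h2 m h; omega)
    norm_num at this ⊢
    linarith

/-! ### Excluding a point between two consecutive `r n` -/

/-- A power of two with exponent strictly between `a n` and `a (n+1)` sends a point of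
`(r (n+1), (3/4) * r n)` into `(1/4, 3/4)`. -/
lemma exists_pow {a : ℕ → ℤ} {n : ℕ} (hg : a n + 2 ≤ a (n+1)) {y : ℝ} (h1 : rr a (n+1) < y)
    (h2 : y < 3/4 * rr a n) : ∃ i, a n < i ∧ i < a (n+1) ∧ 1/4 < 2 ^ i * y ∧ 2 ^ i * y < 3/4 := by
  have hy : 0 < y := (rr_pos a _).trans h1
  by_cases hc : rr a n / 2 < y
  · have e1 : (2 : ℝ) ^ (a n + 1) * rr a n = 1 := by
      rw [zpow_mul_rr]; simp
    have := zpos (a n + 1)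
    refine ⟨a n + 1, by omega, by omega, ?_, ?_⟩ <;> nlinarith
  · obtain ⟨e, he1, he2⟩ := exists_mem_Ioc_zpow (y := (2 : ℝ)) hy (by norm_num)
    have f1 : -(a (n+1) + 1) < e + 1 := by
      by_contra! hcon
      exact absurd (h1.trans_le (he2.trans (zpow_le hcon))) (lt_irrefl _)
    have f2 : e < -(a n + 1) - 1 := by
      by_contra! hcon
      have h3 := zpow_le hcon
      rw [zpow_sub_one₀ (by norm_num)] at h3
      change rr a n * 2⁻¹ ≤ _ at h3
      apply hc; linarith
    refine ⟨-e - 2, by omega, by omega, ?_, ?_⟩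
    · have h3 := mul_lt_mul_of_pos_left he1 (zpos (-e - 2))
      rw [← zpow_add₀ (by norm_num)] at h3
      have : -e - 2 + e = -2 := by ring
      rw [this] at h3
      norm_num at h3 ⊢; exact h3
    · have h3 := mul_le_mul_of_nonneg_left he2 (zpos (-e - 2)).le
      rw [← zpow_add₀ (by norm_num)] at h3
      have : -e - 2 + (e + 1) = -1 := by ring
      rw [this] at h3
      norm_num at h3 ⊢; linarith

lemma ne_of_between {a : ℕ → ℤ} (ha : StrictMono a) {n : ℕ} {i : ℤ} (h1 : a n < i)
    (h2 : i < a (n+1)) (m : ℕ) : a m ≠ i := by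
  rintro rfl
  have := ha.lt_iff_lt.1 h1
  have := ha.lt_iff_lt.1 h2
  omega

/-- A point strictly between `r (n+1)` and `r n` is excluded if the gaps on both sides of `n` are at
least `2`. The multiplier is an integer multiple of `2 ^ (a n - 1)`, hence sends `r m` with `m < n`
to an integer. -/
lemma exclude_between {a : ℕ → ℤ} (ha : StrictMono a) {n : ℕ} (hg : a n + 2 ≤ a (n+1))
    (hl : ∀ m < n, a m + 2 ≤ a n) {y : ℝ} (h1 : rr a (n+1) < y) (h2 : y < rr a n) :
    ∃ c : ℤ, Adm a (c * 2 ^ (a n - 1)) ∧ 1/4 < c * 2 ^ (a n - 1) * y ∧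
      c * 2 ^ (a n - 1) * y < 3/4 := by
  by_cases hc : y < 3/4 * rr a n
  · obtain ⟨i, hi1, hi2, hi3, hi4⟩ := exists_pow hg h1 hc
    obtain ⟨c, hz⟩ := zpow_int (e := i - (a n - 1)) (by omega)
    have e : (c : ℝ) * 2 ^ (a n - 1) = 2 ^ i := by
      rw [← hz, ← zpow_add₀ (by norm_num)]; congr 1; ring
    refine ⟨c, ?_⟩
    rw [e]
    exact ⟨adm_pow (ne_of_between ha hi1 hi2), hi3, hi4⟩
  · refine ⟨3, ?_, ?_⟩
    · exact_mod_cast adm_three hl fun m hm => by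
        have := ha.monotone (show n + 1 ≤ m from hm); omega
    · have e1 : (2 : ℝ) ^ (a n - 1) * rr a n = 1/4 := by
        rw [zpow_mul_rr]
        have : a n - 1 - a n - 1 = -2 := by ring
        rw [this]; norm_num
      have := zpos (a n - 1)
      push_cast
      constructor <;> nlinarith

/-- Every positive real is above `r 0`, or equals some `r n`, or lies strictly between two
consecutive ones, since `r n → 0`. -/
lemma locate {a : ℕ → ℤ} (ha : StrictMono a) {y : ℝ} (hy : 0 < y) :
    rr a 0 < y ∨ (∃ n, y = rr a n) ∨ ∃ n, rr a (n+1) < y ∧ y < rr a n := by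
  have hex : ∃ n, rr a n < y := by
    have hb : ∀ n : ℕ, a 0 + n ≤ a n := by
      intro n
      induction n with
      | zero => simp
      | succ n ih => have : a n < a (n+1) := ha (Nat.lt_succ_self n); push_cast; omega
    obtain ⟨n, hn⟩ := exists_pow_lt_of_lt_one (div_pos hy (rr_pos a 0))
      (show (1/2 : ℝ) < 1 by norm_num)
    refine ⟨n, ?_⟩
    rw [lt_div_iff₀ (rr_pos a 0)] at hn
    refine lt_of_le_of_lt ?_ hn
    have e : (1/2 : ℝ) ^ n * rr a 0 = 2 ^ (-(n:ℤ) - a 0 - 1) := by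
      rw [← zpow_mul_rr, zpow_neg]; simp
    rw [e]
    exact zpow_le (by have := hb n; omega)
  classical
  have hs := Nat.find_spec hex
  have hm := fun m => Nat.find_min hex (m := m)
  rcases h : Nat.find hex with _ | n
  · rw [h] at hs; exact Or.inl hs
  · rw [h] at hs hm
    have h3 := not_lt.1 (hm n (by omega))
    rcases h3.eq_or_lt with h4 | h4
    · exact Or.inr (Or.inl ⟨n, h4⟩)
    · exact Or.inr (Or.inr ⟨n, hs, h4⟩)

/-- For `y > r 0`, take `t = 1 / (4 * r 0)` or `t = 1 / (2 * y)`: every `t` in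
`[0, 1 / (4 * r 0)]` is admissible. -/
lemma exclude_large {a : ℕ → ℤ} (ha : StrictMono a) {y : ℝ} (h : rr a 0 < y) :
    ∃ t, Adm a t ∧ ¬ Near (t * y) := by
  have h0 := rr_pos a 0
  have hy : 0 < y := h0.trans h
  have key : ∀ t, 0 ≤ t → t * rr a 0 ≤ 1/4 → Adm a t := by
    intro t ht h1 n
    apply near_of_small
    rw [abs_of_nonneg (mul_nonneg ht (rr_pos a n).le)]
    exact (mul_le_mul_of_nonneg_left (rr_anti ha (Nat.zero_le n)) ht).trans h1
  by_cases hc : y < 2 * rr a 0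
  · refine ⟨1 / (4 * rr a 0), key _ (by positivity) (by field_simp; norm_num), not_near 0 ?_ ?_⟩
    · rw [div_mul_eq_mul_div, lt_div_iff₀ (by positivity)]; push_cast; linarith
    · rw [div_mul_eq_mul_div, div_lt_iff₀ (by positivity)]; push_cast; linarith
  · have e : 1 / (2 * y) * y = 1/2 := by field_simp
    refine ⟨1 / (2 * y), key _ (by positivity) ?_, ?_⟩
    · rw [div_mul_eq_mul_div, div_le_iff₀ (by positivity)]; linarith
    · rw [e]; exact not_near 0 (by norm_num) (by norm_num)

/-! ### The neighbourhood of a gap equal to one -/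

/-- For `δ` well below `R = r (k+1)`, multipliers that send `R` to an integer leave over only
the values `δ = r n` with `n ≥ k + 2`. -/
lemma exclude_delta {a : ℕ → ℤ} (ha : StrictMono a) {k : ℕ}
    (hg : ∀ n, k + 1 ≤ n → a n + 2 ≤ a (n+1)) (hg3 : a (k+1) + 3 ≤ a (k+2)) {δ : ℝ}
    (h0 : 0 < δ) (h1 : δ < 3/4 * rr a (k+1)) :
    (∃ t, Adm a t ∧ (∃ z : ℤ, t * rr a (k+1) = z) ∧ 1/4 < t * δ ∧ t * δ < 3/4) ∨
      ∃ n, k + 2 ≤ n ∧ δ = rr a n := by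
  have hR := rr_pos a (k+1)
  have big : ∀ n, δ ≤ rr a n ∨ k + 1 < n := by
    intro n
    by_cases hn : n ≤ k + 1
    · left; have := rr_anti ha hn; linarith
    · right; omega
  rcases locate ha h0 with h | ⟨n, rfl⟩ | ⟨n, hn1, hn2⟩
  · have := rr_anti ha (Nat.zero_le (k+1)); linarith
  · right
    refine ⟨n, ?_, rfl⟩
    by_contra! hn
    have := rr_anti ha (show n ≤ k + 1 by omega); linarith
  · left
    have hkn : k + 1 ≤ n := by
      by_contra! hn
      have := rr_anti ha (show n + 1 ≤ k + 1 by omega); linarith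
    rcases hkn.eq_or_lt with h | h
    · subst h
      obtain ⟨i, hi1, hi2, hi3, hi4⟩ := exists_pow (hg _ le_rfl) hn1 h1
      refine ⟨2 ^ i, adm_pow (ne_of_between ha hi1 hi2), ?_, hi3, hi4⟩
      rw [zpow_mul_rr]; exact zpow_int (by omega)
    · obtain ⟨c, hc1, hc2, hc3⟩ := exclude_between ha (hg n hkn) (fun m hm => by
        obtain ⟨p, rfl⟩ : ∃ p, n = p + 1 := ⟨n - 1, by omega⟩
        have := hg p (by omega)
        have := ha.monotone (show m ≤ p by omega); omega) hn1 hn2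
      refine ⟨_, hc1, ?_, hc2, hc3⟩
      have := ha.monotone (show k + 2 ≤ n by omega)
      obtain ⟨z, hz⟩ := zpow_int (e := a n - 1 - a (k+1) - 1) (by omega)
      rw [mul_assoc, zpow_mul_rr, hz]
      exact ⟨c * z, by push_cast; ring⟩

/-- Admissibility of `2 ^ (a n - 1) - s`: the first term sends `r j` with `j < n` to an integer,
`r n` to `1/4`, and later points to at most `1/16`; so it suffices that `s` is admissible and sends
the points after `r (k+1)` into `[0, 1/8]`. -/
lemma adm_sub {a : ℕ → ℤ} {k n : ℕ} (hkn : k + 2 ≤ n) (hl : ∀ m < n, a m + 2 ≤ a n)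
    (hr : ∀ m, n < m → a n + 2 ≤ a m) {s : ℝ} (hs1 : Adm a s)
    (hs2 : ∀ j, k + 2 ≤ j → 0 ≤ s * rr a j ∧ s * rr a j ≤ 1/8) :
    Adm a (2 ^ (a n - 1) - s) := by
  intro j
  rw [sub_mul, zpow_mul_rr]
  rcases lt_trichotomy j n with h | h | h
  · obtain ⟨z, hz⟩ := zpow_int (e := a n - 1 - a j - 1) (by have := hl j h; omega)
    rw [hz]; exact near_int_sub z (hs1 j)
  · subst h
    have : a j - 1 - a j - 1 = -2 := by ring
    rw [this]
    have := hs2 j hkn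
    apply near_of_small
    norm_num [abs_le]
    constructor <;> linarith
  · have h1 := hs2 j (by omega)
    have h2 := zpow_le (e := a n - 1 - a j - 1) (f := -4) (by have := hr j h; omega)
    have h3 := zpos (a n - 1 - a j - 1)
    apply near_of_small
    norm_num at h2
    rw [abs_le]
    constructor <;> linarith

/-- The multipliers `2 ^ (a (k+1) - 2)` and `7 * 2 ^ (a (k+1) - 2)`: modulo one, both send
`r k` and `r (k+1)` to `±1/4` and `±1/8`. -/
lemma adm_one_seven {a : ℕ → ℤ} (ha : StrictMono a) {k : ℕ} (hk : a (k+1) = a k + 1)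
    (hl : ∀ m < k, a m + 2 ≤ a k) (hg3 : a (k+1) + 3 ≤ a (k+2)) {c : ℤ} (hc : c = 1 ∨ c = 7) :
    Adm a (c * 2 ^ (a (k+1) - 2)) ∧ ∀ j, k + 2 ≤ j →
      0 ≤ (c * 2 ^ (a (k+1) - 2)) * rr a j ∧ (c * 2 ^ (a (k+1) - 2)) * rr a j ≤ 1/8 := by
  have late : ∀ j, k + 2 ≤ j →
      0 ≤ (c * 2 ^ (a (k+1) - 2)) * rr a j ∧ (c * 2 ^ (a (k+1) - 2)) * rr a j ≤ 1/8 := by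
    intro j hj
    rw [mul_assoc, zpow_mul_rr]
    have := ha.monotone hj
    have h2 := zpow_le (e := a (k+1) - 2 - a j - 1) (f := -6) (by omega)
    have h3 := zpos (a (k+1) - 2 - a j - 1)
    norm_num at h2
    rcases hc with rfl | rfl <;> push_cast <;> constructor <;> linarith
  refine ⟨fun j => ?_, late⟩
  by_cases hj : k + 2 ≤ j
  · have := late j hj
    apply near_of_small
    rw [abs_le]; constructor <;> linarith
  rw [mul_assoc, zpow_mul_rr]
  rcases lt_trichotomy j k with h | h | h
  · obtain ⟨z, hz⟩ := zpow_int (e := a (k+1) - 2 - a j - 1) (by have := hl j h; omega)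
    rw [hz]; exact ⟨c * z, by simp⟩
  · subst h
    have : a (j+1) - 2 - a j - 1 = -2 := by omega
    rw [this]
    rcases hc with rfl | rfl
    · exact ⟨0, by norm_num [abs_le]⟩
    · exact ⟨2, by norm_num [abs_le]⟩
  · obtain rfl : j = k + 1 := by omega
    have : a (k+1) - 2 - a (k+1) - 1 = -3 := by omega
    rw [this]
    rcases hc with rfl | rfl
    · exact ⟨0, by norm_num [abs_le]⟩
    · exact ⟨1, by norm_num [abs_le]⟩

/-- If the gap at `k` is `1`, the points other than `R = r (k+1)` strictly between `r (k+2)` and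
`r k` are excluded. Here `7 * 2 ^ (a (k+1) - 2)` handles the points above `(10/7) * R`. -/
lemma exclude_near_gap {a : ℕ → ℤ} (ha : StrictMono a) {k : ℕ} (hk : a (k+1) = a k + 1)
    (hl : ∀ m < k, a m + 2 ≤ a k) (hg : ∀ n, k + 1 ≤ n → a n + 2 ≤ a (n+1))
    (hg3 : a (k+1) + 3 ≤ a (k+2)) {x : ℝ} (h1 : rr a (k+2) < x) (h2 : x < rr a k)
    (hne : x ≠ rr a (k+1)) : ∃ t, Adm a t ∧ ¬ Near (t * x) := by
  have hR := rr_pos a (k+1)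
  have eR : (2 : ℝ) ^ (a (k+1) - 2) * rr a (k+1) = 1/8 := by
    rw [zpow_mul_rr]
    have : a (k+1) - 2 - a (k+1) - 1 = -3 := by omega
    rw [this]; norm_num
  have eK : rr a k = 2 * rr a (k+1) := by
    have : -(a k + 1) = -(a (k+1) + 1) + 1 := by omega
    unfold rr
    rw [this, zpow_add_one₀ (by norm_num)]; ring
  have hp := zpos (a (k+1) - 2)
  have left : ∀ n, k + 2 ≤ n → ∀ m < n, a m + 2 ≤ a n := by
    intro n hn m hm
    obtain ⟨p, rfl⟩ : ∃ p, n = p + 1 := ⟨n - 1, by omega⟩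
    have := hg p (by omega)
    have := ha.monotone (show m ≤ p by omega); omega
  have right : ∀ n, k + 2 ≤ n → ∀ m, n < m → a n + 2 ≤ a m := by
    intro n hn m hm
    have := hg n (by omega)
    have := ha.monotone (show n + 1 ≤ m from hm); omega
  have eN : ∀ n, (2 : ℝ) ^ (a n - 1) * rr a n = 1/4 := by
    intro n
    rw [zpow_mul_rr]
    have : a n - 1 - a n - 1 = -2 := by ring
    rw [this]; norm_num
  have iN : ∀ n, k + 2 ≤ n → ∃ z : ℤ, (2 : ℝ) ^ (a n - 1) * rr a (k+1) = z := by
    intro n hn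
    rw [zpow_mul_rr]
    exact zpow_int (by have := left n hn (k+1) (by omega); omega)
  have sN : ∀ n, k + 2 ≤ n → (2 : ℝ) ^ (a (k+1) - 2) * rr a n ≤ 1/64 := by
    intro n hn
    rw [zpow_mul_rr]
    have := ha.monotone hn
    have h2 := zpow_le (e := a (k+1) - 2 - a n - 1) (f := -6) (by omega)
    norm_num at h2 ⊢
    exact h2
  rcases lt_or_gt_of_ne hne with h | h
  · by_cases hc : x < 3/4 * rr a (k+1)
    · obtain ⟨i, hi1, hi2, hi3, hi4⟩ := exists_pow (hg _ le_rfl) h1 hc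
      exact ⟨2 ^ i, adm_pow (ne_of_between ha hi1 hi2),
        not_near 0 (by push_cast; linarith) (by push_cast; linarith)⟩
    · rcases exclude_delta ha hg hg3 (δ := rr a (k+1) - x) (by linarith) (by linarith) with
        ⟨t, ht, ⟨z, hz⟩, h3, h4⟩ | ⟨n, hn, h3⟩
      · refine ⟨t, ht, not_near (z - 1) ?_ ?_⟩ <;> push_cast <;> linarith
      · obtain ⟨s1, s2⟩ := adm_one_seven ha hk hl hg3 (c := 1) (Or.inl rfl)
        refine ⟨_, adm_sub hn (left n hn) (right n hn) s1 s2, ?_⟩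
        obtain ⟨z, hz⟩ := iN n hn
        have hx : x = rr a (k+1) - rr a n := by linarith
        have e : ((2 : ℝ) ^ (a n - 1) - (1 : ℤ) * 2 ^ (a (k+1) - 2)) * x
            = z - 1/4 - 1/8 + 2 ^ (a (k+1) - 2) * rr a n := by
          rw [hx, ← hz, ← eN n, ← eR]; push_cast; ring
        rw [e]
        have := sN n hn
        have := mul_pos hp (rr_pos a n)
        refine not_near (z - 1) ?_ ?_ <;> push_cast <;> linarith
  · by_cases hc : 10/7 * rr a (k+1) < x
    · obtain ⟨s1, s2⟩ := adm_one_seven ha hk hl hg3 (c := 7) (Or.inr rfl)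
      refine ⟨_, s1, not_near 1 ?_ ?_⟩ <;> push_cast <;> nlinarith
    · rcases exclude_delta ha hg hg3 (δ := x - rr a (k+1)) (by linarith) (by linarith) with
        ⟨t, ht, ⟨z, hz⟩, h3, h4⟩ | ⟨n, hn, h3⟩
      · refine ⟨t, ht, not_near z ?_ ?_⟩ <;> linarith
      · obtain ⟨s1, s2⟩ := adm_one_seven ha hk hl hg3 (c := 7) (Or.inr rfl)
        refine ⟨_, adm_sub hn (left n hn) (right n hn) s1 s2, ?_⟩
        obtain ⟨z, hz⟩ := iN n hn
        have hx : x = rr a (k+1) + rr a n := by linarith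
        have e : ((2 : ℝ) ^ (a n - 1) - (7 : ℤ) * 2 ^ (a (k+1) - 2)) * x
            = z + 1/4 - 7 * (1/8) - 7 * (2 ^ (a (k+1) - 2) * rr a n) := by
          rw [hx, ← hz, ← eN n, ← eR]; push_cast; ring
        rw [e]
        have := sN n hn
        have := mul_pos hp (rr_pos a n)
        refine not_near (z - 1) ?_ ?_ <;> push_cast <;> linarith

/-! ### Sufficiency -/

lemma exclude {a : ℕ → ℤ} (ha : StrictMono a)
    (hi : ∀ m n : ℕ, ¬ 1 < a (m + 1) - a m → ¬ 1 < a (n + 1) - a n → m = n)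
    (hii : ∀ n : ℕ, a (n + 1) - a n = 1 → 2 < a (n + 2) - a (n + 1))
    {x : ℝ} (hx : 0 < x) (hne : ∀ n, x ≠ rr a n) : ∃ t, Adm a t ∧ ¬ Near (t * x) := by
  have gap1 : ∀ n, a n + 1 ≤ a (n+1) := fun n => ha (Nat.lt_succ_self n)
  have left : ∀ n, (∀ p, p + 1 = n → a p + 2 ≤ a n) → ∀ m < n, a m + 2 ≤ a n := by
    intro n hp m hm
    have := hp (n - 1) (by omega)
    have := ha.monotone (show m ≤ n - 1 by omega)
    omega
  rcases locate ha hx with h | ⟨n, h⟩ | ⟨n, h1, h2⟩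
  · exact exclude_large ha h
  · exact absurd h (hne n)
  · have regular : a n + 2 ≤ a (n+1) → (∀ p, p + 1 = n → a p + 2 ≤ a n) →
        ∃ t, Adm a t ∧ ¬ Near (t * x) := by
      intro hg hp
      obtain ⟨c, hc1, hc2, hc3⟩ := exclude_between ha hg (left n hp) h1 h2
      exact ⟨_, hc1, not_near 0 (by push_cast; linarith) (by push_cast; linarith)⟩
    -- A gap `1` at `k` can only matter for `n = k` and `n = k + 1`.
    have bad : ∀ k, a (k+1) = a k + 1 → rr a (k+2) < x → x < rr a k →
        ∃ t, Adm a t ∧ ¬ Near (t * x) := by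
      intro k hk h3 h4
      have hg : ∀ n, n ≠ k → a n + 2 ≤ a (n+1) := by
        intro n hn
        by_contra! hcon
        exact hn (hi n k (by omega) (by omega))
      refine exclude_near_gap ha hk (left k ?_) (fun n hn => hg n (by omega))
        (by have := hii k (by omega); omega) h3 h4 (hne _)
      rintro p rfl
      exact hg p (by omega)
    by_cases hg : a n + 2 ≤ a (n+1)
    · by_cases hp : ∀ p, p + 1 = n → a p + 2 ≤ a n
      · exact regular hg hp
      · push Not at hp
        obtain ⟨p, rfl, hp⟩ := hp
        exact bad p (by have := gap1 p; omega) h1 (h2.trans_le (rr_anti ha (Nat.le_succ p)))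
    · exact bad n (by have := gap1 n; omega)
        ((rr_anti ha (Nat.le_succ (n+1))).trans_lt h1) h2

/-! ### Necessity -/

/-- The integer nearest to `2 * u` is twice the one nearest to `u`, so the bound for `2 * u`
can be halved. -/
lemma near_eighth {u : ℝ} (h1 : Near u) (h2 : Near (2 * u)) : ∃ z : ℤ, |u - z| ≤ 1/8 := by
  obtain ⟨z, hz⟩ := h1
  obtain ⟨w, hw⟩ := h2
  rw [abs_le] at hz hw
  have h3 : ((w - 2 * z : ℤ) : ℝ) < 1 := by push_cast; linarith
  have h4 : (-1 : ℝ) < ((w - 2 * z : ℤ) : ℝ) := by push_cast; linarith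
  have h5 : w - 2 * z < 1 := by exact_mod_cast h3
  have h6 : -1 < w - 2 * z := by exact_mod_cast h4
  have h7 : (w : ℝ) = 2 * z := by exact_mod_cast (show w = 2 * z by omega)
  refine ⟨z, ?_⟩
  rw [abs_le]
  constructor <;> linarith

lemma near_five {u : ℝ} (h1 : Near u) (h4 : Near (4 * u)) (h8 : Near (2 * (4 * u))) :
    Near (5 * u) := by
  obtain ⟨w, hw⟩ := near_eighth h4 h8
  obtain ⟨z, hz⟩ := h1
  rw [abs_le] at hz hw
  have h3 : ((w - 4 * z : ℤ) : ℝ) < 2 := by push_cast; linarith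
  have h4 : (-2 : ℝ) < ((w - 4 * z : ℤ) : ℝ) := by push_cast; linarith
  have h5 : w - 4 * z < 2 := by exact_mod_cast h3
  have h6 : -2 < w - 4 * z := by exact_mod_cast h4
  -- With `u` in `[-1/4, 1/4]`, the integer nearest to `4 * u` is also nearest to `5 * u`.
  refine ⟨w + z, ?_⟩
  have h7 : w = 4 * z + -1 ∨ w = 4 * z + 0 ∨ w = 4 * z + 1 := by omega
  rcases h7 with rfl | rfl | rfl <;> push_cast at * <;> rw [abs_le] <;> constructor <;> linarith

/-- A sum of two distinct powers of `2` is not a power of `2`. -/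
lemma zpow_add_ne {e f g : ℤ} (h : e < f) : (2 : ℝ) ^ e + 2 ^ f ≠ 2 ^ g := by
  intro hc
  have h0 := zpos e
  have h1 : (2 : ℝ) ^ f < 2 ^ g := by linarith
  have h2 : (2 : ℝ) ^ g < 2 ^ (f + 1) := by
    rw [zpow_add_one₀ (by norm_num), ← hc]
    have := zpow_lt_zpow_right₀ (show (1 : ℝ) < 2 by norm_num) h
    linarith
  rw [zpow_lt_zpow_iff_right₀ (by norm_num)] at h1 h2
  omega

/-- The set `{0} ∪ {± r n}`. -/
def RSet (a : ℕ → ℤ) : Set ℝ := {0} ∪ {x : ℝ | ∃ n : ℕ,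
        x = (2 : ℝ) ^ (-(a n + 1)) ∨ x = -((2 : ℝ) ^ (-(a n + 1)))}

lemma sum_notMem {a : ℕ → ℤ} (ha : StrictMono a) {m n : ℕ} (h : m < n) :
    rr a n + rr a m ∉ RSet a := by
  have hm := rr_pos a m
  have hn := rr_pos a n
  rintro (h0 | ⟨p, hp | hp⟩)
  · rw [Set.mem_singleton_iff] at h0; linarith
  · exact zpow_add_ne (by have := ha h; omega) hp
  · have := rr_pos a p
    unfold rr at *
    linarith

lemma hull_rr {a : ℕ → ℤ} {χ : ℝ →+ Circle1} (h : χ ∈ polar (RSet a)) (n : ℕ) :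
    ∃ u : ℝ, χ (rr a n) = (u : Circle1) ∧ Near u := by
  obtain ⟨u, hu⟩ := QuotientAddGroup.mk_surjective (χ (rr a n))
  refine ⟨u, hu.symm, ?_⟩
  rw [← mem_Tplus_iff]
  have := h.2 (rr a n) (Or.inr ⟨n, Or.inl rfl⟩)
  rw [← hu] at this
  exact this

/-- If `r k = 2 * r (k+1)`, every character in the polar maps `r (k+1)` into `π [-1/8, 1/8]`. -/
lemma hull_eighth {a : ℕ → ℤ} {k : ℕ} (hk : a (k+1) = a k + 1) {χ : ℝ →+ Circle1}
    (h : χ ∈ polar (RSet a)) :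
    ∃ u : ℝ, χ (rr a (k+1)) = (u : Circle1) ∧ Near u ∧ Near (2 * u) ∧ ∃ z : ℤ, |u - z| ≤ 1/8 := by
  obtain ⟨u, hu, hu1⟩ := hull_rr h (k+1)
  have e : rr a k = rr a (k+1) + rr a (k+1) := by
    have : -(a k + 1) = -(a (k+1) + 1) + 1 := by omega
    unfold rr
    rw [this, zpow_add_one₀ (by norm_num)]; ring
  have h2 : Near (2 * u) := by
    rw [← mem_Tplus_iff, two_mul, AddCircle.coe_add, ← hu, ← map_add, ← e]
    exact h.2 _ (Or.inr ⟨k, Or.inl rfl⟩)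
  exact ⟨u, hu, hu1, h2, near_eighth hu1 h2⟩

lemma nec_two {a : ℕ → ℤ} {m n : ℕ} (hm : a (m+1) = a m + 1) (hn : a (n+1) = a n + 1) :
    rr a (n+1) + rr a (m+1) ∈ qcHull (RSet a) := by
  intro χ h
  obtain ⟨u, hu, -, -, z, hz⟩ := hull_eighth hm h
  obtain ⟨v, hv, -, -, w, hw⟩ := hull_eighth hn h
  rw [map_add, hu, hv, ← AddCircle.coe_add, mem_Tplus_iff]
  refine ⟨w + z, ?_⟩
  rw [abs_le] at *
  push_cast
  constructor <;> linarith

lemma nec_one_two {a : ℕ → ℤ} {k : ℕ} (h1 : a (k+1) = a k + 1) (h2 : a (k+2) = a (k+1) + 2) :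
    rr a (k+2) + rr a (k+1) ∈ qcHull (RSet a) := by
  intro χ h
  obtain ⟨u, hu, hu1⟩ := hull_rr h (k+2)
  have e1 : rr a (k+1) = (4 : ℕ) • rr a (k+2) := by
    have : -(a (k+1) + 1) = -(a (k+2) + 1) + 2 := by omega
    unfold rr
    rw [this, zpow_add₀ (by norm_num)]; norm_num; ring
  have e0 : rr a k = (8 : ℕ) • rr a (k+2) := by
    have : -(a k + 1) = -(a (k+2) + 1) + 3 := by omega
    unfold rr
    rw [this, zpow_add₀ (by norm_num)]; norm_num; ring
  have mul_coe : ∀ N : ℕ, χ (N • rr a (k+2)) = (((N : ℝ) * u : ℝ) : Circle1) := by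
    intro N
    rw [map_nsmul, hu, ← AddCircle.coe_nsmul, nsmul_eq_mul]
  have n4 : Near (4 * u) := by
    have := h.2 (rr a (k+1)) (Or.inr ⟨k+1, Or.inl rfl⟩)
    rw [e1, mul_coe, mem_Tplus_iff] at this
    exact_mod_cast this
  have n8 : Near (2 * (4 * u)) := by
    have := h.2 (rr a k) (Or.inr ⟨k, Or.inl rfl⟩)
    rw [e0, mul_coe, mem_Tplus_iff] at this
    convert this using 1
    push_cast; ring
  have e : rr a (k+2) + rr a (k+1) = (5 : ℕ) • rr a (k+2) := by
    rw [e1]; simp only [nsmul_eq_mul]; push_cast; ring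
  rw [e, mul_coe, mem_Tplus_iff]
  exact_mod_cast near_five hu1 n4 n8

/-! ### The characters `x ↦ π (t * x)` -/

/-- The character `x ↦ π (t * x)` of `ℝ`. -/
def charT (t : ℝ) : ℝ →+ Circle1 where
  toFun x := ((t * x : ℝ) : Circle1)
  map_zero' := by simp
  map_add' x y := by rw [mul_add, AddCircle.coe_add]

lemma charT_mem {a : ℕ → ℤ} {t : ℝ} (h : Adm a t) : charT t ∈ polar (RSet a) := by
  refine ⟨(AddCircle.continuous_mk' (1 : ℝ)).comp (continuous_const.mul continuous_id), ?_⟩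
  intro x hx
  change ((t * x : ℝ) : Circle1) ∈ Tplus
  rw [mem_Tplus_iff]
  rcases hx with h0 | ⟨n, hn | hn⟩
  · rw [Set.mem_singleton_iff] at h0
    rw [h0, mul_zero]; exact_mod_cast near_int 0
  · rw [hn]; exact h n
  · rw [hn, mul_neg]; exact near_neg (h n)

lemma near_of_hull {a : ℕ → ℤ} {x t : ℝ} (hx : x ∈ qcHull (RSet a)) (h : Adm a t) :
    Near (t * x) := (mem_Tplus_iff _).1 (hx _ (charT_mem h))

/-- Theorem B: `R_{a,2}` is quasi-convex in `ℝ` iff (i) the gaps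
`gₙ = a_{n+1} - aₙ` satisfy `gₙ > 1` for all but possibly one index, and
(ii) if `gₙ = 1` for some `n`, then `g_{n+1} > 2`. -/
theorem stmt1 (a : ℕ → ℤ) (ha : StrictMono a) :
    IsQuasiConvex ({0} ∪ {x : ℝ | ∃ n : ℕ,
        x = (2 : ℝ) ^ (-(a n + 1)) ∨ x = -((2 : ℝ) ^ (-(a n + 1)))}) ↔
      ((∀ m n : ℕ, ¬ 1 < a (m + 1) - a m → ¬ 1 < a (n + 1) - a n → m = n) ∧
       (∀ n : ℕ, a (n + 1) - a n = 1 → 2 < a (n + 2) - a (n + 1))) := by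
  change qcHull (RSet a) = RSet a ↔ _
  have gap1 : ∀ n, a n + 1 ≤ a (n+1) := fun n => ha (Nat.lt_succ_self n)
  constructor
  · intro hq
    have two : ∀ m n : ℕ, m < n → a (m+1) = a m + 1 → a (n+1) = a n + 1 → False := by
      intro m n hmn hm hn
      refine sum_notMem ha (show m + 1 < n + 1 by omega) ?_
      rw [← hq]
      exact nec_two hm hn
    refine ⟨fun m n hm hn => ?_, fun n hn => ?_⟩
    · have hm' : a (m+1) = a m + 1 := by have := gap1 m; omega
      have hn' : a (n+1) = a n + 1 := by have := gap1 n; omega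
      rcases lt_trichotomy m n with h | h | h
      · exact (two m n h hm' hn').elim
      · exact h
      · exact (two n m h hn' hm').elim
    · have hn' : a (n+1) = a n + 1 := by omega
      by_contra! hcon
      have := gap1 (n+1)
      rcases (show a (n+2) = a (n+1) + 1 ∨ a (n+2) = a (n+1) + 2 by
        change a (n+1) + 1 ≤ a (n+2) at this; omega) with h | h
      · exact two n (n+1) (by omega) hn' h
      · refine sum_notMem ha (show n + 1 < n + 2 by omega) ?_
        rw [← hq]
        exact nec_one_two hn' h
  · rintro ⟨hi, hii⟩
    apply Set.Subset.antisymm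
    · intro x hx
      by_contra hne
      have hpos : ∀ y : ℝ, 0 < y → (∀ t, Adm a t → Near (t * y)) → ∃ n, y = rr a n := by
        intro y hy hn
        by_contra! hc
        obtain ⟨t, ht1, ht2⟩ := exclude ha hi hii hy hc
        exact ht2 (hn t ht1)
      apply hne
      rcases lt_trichotomy x 0 with h | h | h
      · obtain ⟨n, hn⟩ := hpos (-x) (by linarith) fun t ht => by
          rw [mul_neg]; exact near_neg (near_of_hull hx ht)
        exact Or.inr ⟨n, Or.inr (by unfold rr at hn; linarith)⟩
      · exact Or.inl h
      · obtain ⟨n, hn⟩ := hpos x h fun t ht => near_of_hull hx ht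
        exact Or.inr ⟨n, Or.inl hn⟩
    · exact fun x hx χ hχ => hχ.2 x hx
end
end

section
/- Let $Y \subseteq \mathbb{R}$ be a compact subset. If there exists a real number $\alpha \neq 0$ such that $\alpha Y \subseteq (-1/2, 1/2)$ and $\pi(\alpha Y)$ is quasi-convex in $\mathbb{T}$, then $Y$ is quasi-convex in $\mathbb{R}$. -/
/-!
After rescaling by `α`, a point `x` of the hull of `Y` projects into the hull of `π(αY)`, since
characters of `𝕋` pull back along `t ↦ π(αt)` to characters of `ℝ`. Hence `αx ∈ αY + ℤ`.
By compactness `αY ⊆ [-c, c]` for some `c < 1/2`, and dilating by small factors gives characters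
`t ↦ π(sαt)` of `ℝ` which separate every point outside `[-c, c]` from `αY`
(`exists_separating_dilation`). So `|αx| ≤ c < 1/2`, and two numbers in `(-1/2, 1/2)` which differ
by an integer are equal.
-/

noncomputable section

theorem circleProj_eq_iff {a b : ℝ} : circleProj a = circleProj b ↔ ∃ n : ℤ, b - a = n := by
  unfold circleProj
  rw [QuotientAddGroup.eq, AddSubgroup.mem_zmultiples_iff]
  simp only [zsmul_eq_mul, mul_one, neg_add_eq_sub, eq_comm]

/-- The character `t ↦ π(st)` of `ℝ`. -/
def dilationChar (s : ℝ) : ℝ →+ Circle1 where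
  toFun t := circleProj (s * t)
  map_zero' := by simp [circleProj]
  map_add' a b := by simp [circleProj, mul_add]

theorem continuous_dilationChar (s : ℝ) : Continuous (dilationChar s) :=
  (AddCircle.continuous_mk' (1 : ℝ)).comp (continuous_const.mul continuous_id)

theorem circleProj_mem_Tplus_of_abs_le {r : ℝ} (h : |r| ≤ 1 / 4) : circleProj r ∈ Tplus :=
  ⟨r, abs_le.mp h, rfl⟩

theorem circleProj_notMem_Tplus {r : ℝ} (h1 : 1 / 4 < |r|) (h2 : |r| ≤ 1 / 2) :
    circleProj r ∉ Tplus := by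
  rintro ⟨q, ⟨hq1, hq2⟩, hq⟩
  obtain ⟨n, hn⟩ := circleProj_eq_iff.mp hq
  obtain ⟨h3, h4⟩ := abs_le.mp h2
  have hn1 : n < 1 := by
    have : (n : ℝ) < 1 := by linarith
    exact_mod_cast this
  have hn2 : -1 < n := by
    have : (-1 : ℝ) < n := by linarith
    exact_mod_cast this
  obtain rfl : n = 0 := by omega
  have : r = q := by push_cast at hn; linarith
  subst this
  exact absurd (abs_le.mpr ⟨hq1, hq2⟩) (not_le.mpr h1)

/-- Some dilation maps `[-c, c]` into `[-1/4, 1/4]` while `z ∉ [-c, c]` lands outside it, yet close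
enough to `0` that its class is not in `𝕋₊`. -/
theorem exists_separating_dilation {c z : ℝ} (hc : 0 < c) (hz : c < |z|) :
    ∃ s : ℝ, (∀ t, |t| ≤ c → |s * t| ≤ 1 / 4) ∧ 1 / 4 < |s * z| ∧ |s * z| ≤ 1 / 2 := by
  have hz0 : 0 < |z| := hc.trans hz
  have hs : 0 < min (1 / (4 * c)) (1 / (2 * |z|)) := by positivity
  refine ⟨min (1 / (4 * c)) (1 / (2 * |z|)), fun t ht => ?_, ?_, ?_⟩ <;>
    rw [abs_mul, abs_of_pos hs]
  · calc _ ≤ 1 / (4 * c) * c := by gcongr; exact min_le_left _ _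
      _ = 1 / 4 := by field_simp
  · rw [← div_lt_iff₀ hz0, lt_min_iff]
    constructor
    · rw [div_div]; gcongr
    · rw [div_div]; gcongr; norm_num
  · calc _ ≤ 1 / (2 * |z|) * |z| := by gcongr; exact min_le_right _ _
      _ = 1 / 2 := by field_simp

/-- For compact `Y` the constraint `αY ⊆ (-1/2, 1/2)` extends to the hull of `Y`. Compactness
provides a bound `c < 1/2` on `|αY|`, which every point of the hull inherits. -/
theorem abs_lt_half_of_mem_qcHull {Y : Set ℝ} (hcpt : IsCompact Y) {α : ℝ}
    (hsub : (fun y : ℝ => α * y) '' Y ⊆ Set.Ioo (-(1/2) : ℝ) (1/2))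
    {x : ℝ} (hx : x ∈ qcHull Y) : |α * x| < 1 / 2 := by
  obtain ⟨c, hc0, hc2, hc⟩ : ∃ c : ℝ, 0 < c ∧ c < 1 / 2 ∧ ∀ y ∈ Y, |α * y| ≤ c := by
    rcases Y.eq_empty_or_nonempty with rfl | hne
    · exact ⟨1 / 4, by norm_num, by norm_num, by simp⟩
    · obtain ⟨m, hm, hmax⟩ := hcpt.exists_isMaxOn hne
        (f := fun y => |α * y|) (by fun_prop)
      have hlt : |α * m| < 1 / 2 := abs_lt.mpr (hsub ⟨m, hm, rfl⟩)
      exact ⟨max |α * m| (1 / 4), by positivity, max_lt hlt (by norm_num),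
        fun y hy => (hmax hy).trans (le_max_left _ _)⟩
  refine lt_of_le_of_lt (not_lt.mp fun hlt => ?_) hc2
  obtain ⟨s, hs, h1, h2⟩ := exists_separating_dilation hc0 hlt
  rw [← mul_assoc] at h1 h2
  refine circleProj_notMem_Tplus h1 h2 (hx (dilationChar (s * α)) ⟨continuous_dilationChar _, ?_⟩)
  intro y hy
  refine circleProj_mem_Tplus_of_abs_le ?_
  rw [mul_assoc]
  exact hs _ (hc y hy)

/-- If `Y ⊆ ℝ` is compact and there is `α ≠ 0` with `αY ⊆ (-1/2, 1/2)` and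
`π(αY)` quasi-convex in `𝕋`, then `Y` is quasi-convex in `ℝ`. -/
theorem stmt10 (Y : Set ℝ) (hcpt : IsCompact Y) (α : ℝ) (hα : α ≠ 0)
    (hsub : (fun y : ℝ => α * y) '' Y ⊆ Set.Ioo (-(1/2) : ℝ) (1/2))
    (hqc : IsQuasiConvex (circleProj '' ((fun y : ℝ => α * y) '' Y))) :
    IsQuasiConvex Y := by
  refine Set.Subset.antisymm (fun x hx => ?_) (fun x hx χ hχ => hχ.2 x hx)
  have hproj : circleProj (α * x) ∈ qcHull (circleProj '' ((fun y : ℝ => α * y) '' Y)) :=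
    fun χ hχ => hx (χ.comp (dilationChar α))
      ⟨hχ.1.comp (continuous_dilationChar α), fun y hy => hχ.2 _ ⟨_, ⟨y, hy, rfl⟩, rfl⟩⟩
  rw [hqc] at hproj
  obtain ⟨_, ⟨y, hy, rfl⟩, hyx⟩ := hproj
  obtain ⟨n, hn⟩ := circleProj_eq_iff.mp hyx
  obtain ⟨hx1, hx2⟩ := abs_lt.mp (abs_lt_half_of_mem_qcHull hcpt hsub hx)
  obtain ⟨hy1, hy2⟩ := hsub ⟨y, hy, rfl⟩
  simp only at hn hy1 hy2
  have hn1 : n < 1 := by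
    have : (n : ℝ) < 1 := by linarith
    exact_mod_cast this
  have hn2 : -1 < n := by
    have : (-1 : ℝ) < n := by linarith
    exact_mod_cast this
  obtain rfl : n = 0 := by omega
  have hxy : α * x = α * y := by push_cast at hn; linarith
  rwa [mul_left_cancel₀ hα hxy]
end
end
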